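/- Let S(l,r) be the signed double star consisting of a positive central edge z₁z₂, together with l positive pendant edges z₁v₁,…,z₁v_l and two negative pendant edges z₁u₁, z₁u₂ attached at z₁, and r positive pendant edges z₂w₁,…,z₂w_r attached at z₂ (so S(l,r) is a (l+r+4, l+r+1, 2) signed graph). If l = r − 2 (with r ≥ 2), then S(l,r) is additively graceful. -/

import Mathlib

/-- A signed graph on vertex type `V`: a finite set of positive edges and a
finite set of negative edges, disjoint from one another, with no loops. -/
structure SignedGraph (V : Type) [DecidableEq V] where
  posEdges : Finset (Sym2 V)
  negEdges : Finset (Sym2 V)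
  disjoint : Disjoint posEdges negEdges
  pos_not_diag : ∀ e ∈ posEdges, ¬ e.IsDiag
  neg_not_diag : ∀ e ∈ negEdges, ¬ e.IsDiag

/-- Induced label on a positive edge: `|f u - f v|`. -/
def posLabel {V : Type} (f : V → ℕ) : Sym2 V → ℕ :=
  Sym2.lift ⟨fun u v => Nat.dist (f u) (f v), fun u v => Nat.dist_comm _ _⟩

/-- Induced label on a negative edge: `f u + f v`. -/
def negLabel {V : Type} (f : V → ℕ) : Sym2 V → ℕ :=
  Sym2.lift ⟨fun u v => f u + f v, fun u v => Nat.add_comm _ _⟩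

/-- `f` is an additively graceful labeling of the signed graph `S`:
it is an injection into `{0, 1, …, m + ⌈(n+1)/2⌉}` whose induced labels on the
positive edges are exactly `{1, …, m}` and on the negative edges exactly
`{1, …, n}`, where `m` (resp. `n`) is the number of positive (negative) edges.
(Note that `⌈(n+1)/2⌉ = (n+2)/2` with natural-number division.) -/
def IsAddGraceful {V : Type} [DecidableEq V] (S : SignedGraph V) (f : V → ℕ) : Prop :=
  Function.Injective f ∧
  (∀ v : V, f v ≤ S.posEdges.card + (S.negEdges.card + 2) / 2) ∧
  S.posEdges.image (posLabel f) = Finset.Icc 1 S.posEdges.card ∧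
  S.negEdges.image (negLabel f) = Finset.Icc 1 S.negEdges.card

/-- Vertex type of a double star: the two centers `z₁, z₂`, the `a` positive
pendant neighbours and `b` negative pendant neighbours of `z₁`, and the `c`
positive pendant neighbours of `z₂`. -/
abbrev DSV (a b c : ℕ) : Type := (Unit ⊕ Unit) ⊕ (Fin a ⊕ Fin b ⊕ Fin c)

/-- the first central vertex `z₁` -/
def z1 {a b c : ℕ} : DSV a b c := Sum.inl (Sum.inl ())
/-- the second central vertex `z₂` -/
def z2 {a b c : ℕ} : DSV a b c := Sum.inl (Sum.inr ())
/-- the end `vᵢ` of the `i`-th positive pendant edge at `z₁` -/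
def vv {a b c : ℕ} (i : Fin a) : DSV a b c := Sum.inr (Sum.inl i)
/-- the end `uᵢ` of the `i`-th negative pendant edge at `z₁` -/
def uu {a b c : ℕ} (i : Fin b) : DSV a b c := Sum.inr (Sum.inr (Sum.inl i))
/-- the end `wᵢ` of the `i`-th positive pendant edge at `z₂` -/
def ww {a b c : ℕ} (i : Fin c) : DSV a b c := Sum.inr (Sum.inr (Sum.inr i))

/-- The signed double star with a *positive* central edge `z₁z₂`,
`a` positive and `b` negative pendant edges at `z₁`, and `c` positive pendant
edges at `z₂`. -/
def doubleStarPos (a b c : ℕ) : SignedGraph (DSV a b c) where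
  posEdges :=
    {s(z1, z2)} ∪ Finset.univ.image (fun i : Fin a => s(z1, vv i)) ∪
      Finset.univ.image (fun i : Fin c => s(z2, ww i))
  negEdges := Finset.univ.image (fun i : Fin b => s(z1, uu i))
  disjoint := by
    rw [Finset.disjoint_left]
    intro e he1 he2
    simp only [Finset.mem_union, Finset.mem_singleton, Finset.mem_image,
      Finset.mem_univ, true_and] at he1 he2
    obtain ⟨j, rfl⟩ := he2
    rcases he1 with (h | ⟨i, h⟩) | ⟨i, h⟩ <;>
      simp [z1, z2, vv, uu, ww, Sym2.eq_iff] at h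
  pos_not_diag := by
    intro e he
    simp only [Finset.mem_union, Finset.mem_singleton, Finset.mem_image,
      Finset.mem_univ, true_and] at he
    rcases he with (rfl | ⟨i, rfl⟩) | ⟨i, rfl⟩ <;>
      simp [z1, z2, vv, ww, Sym2.mk_isDiag_iff]
  neg_not_diag := by
    intro e he
    simp only [Finset.mem_image, Finset.mem_univ, true_and] at he
    obtain ⟨i, rfl⟩ := he
    simp [z1, uu, Sym2.mk_isDiag_iff]

/-!
Put `z₁ ↦ 0`, `z₂ ↦ l + b + 1` and `uᵢ ↦ 1, …, b`, so that an edge at `z₁` is labeled by its other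
end. On the two sides of the label of `z₂` there are gaps for the ends of its pendant edges: `l`
labels immediately below it, which produce the differences `1, …, l`, and, after the `l` labels
of the `vᵢ`, another `b` labels above it, which produce the differences `l + 1, …, l + b`. Together
with `l + b + 1` from `z₁z₂` and `l + b + 2, …, 2l + b + 1` from the edges `z₁vᵢ` these are all the
positive edge labels. The vertex labels are `0, …, 2l + 2b + 1`, and `b ≤ 2` is what keeps
them at most `m + ⌈(b + 1) / 2⌉` with `m = 2l + b + 1`.
-/

open Finset Function

theorem image_const_add_fin_univ (k n : ℕ) :
    univ.image (fun i : Fin n => k + (i : ℕ)) = Ico k (k + n) := by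
  ext x
  simp only [mem_image, mem_univ, true_and, mem_Ico]
  constructor
  · rintro ⟨i, rfl⟩
    omega
  · rintro ⟨hkx, hxn⟩
    exact ⟨⟨x - k, by omega⟩, Nat.add_sub_cancel' hkx⟩

theorem sym2_mk_comp_injective {ι V : Type*} (x : V) {g : ι → V} (hg : Injective g) :
    Injective fun i => s(x, g i) :=
  fun _ _ h => hg (Sym2.congr_right.1 h)

section Edges

variable {V : Type}

theorem posLabel_mk (f : V → ℕ) (x y : V) : posLabel f s(x, y) = Nat.dist (f x) (f y) := rfl

theorem negLabel_mk (f : V → ℕ) (x y : V) : negLabel f s(x, y) = f x + f y := rfl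

variable {a b c : ℕ}

theorem vv_injective : Injective (vv : Fin a → DSV a b c) :=
  Sum.inr_injective.comp Sum.inl_injective

theorem uu_injective : Injective (uu : Fin b → DSV a b c) :=
  Sum.inr_injective.comp (Sum.inr_injective.comp Sum.inl_injective)

theorem ww_injective : Injective (ww : Fin c → DSV a b c) :=
  Sum.inr_injective.comp (Sum.inr_injective.comp Sum.inr_injective)

theorem card_negEdges_doubleStarPos (a b c : ℕ) : #(doubleStarPos a b c).negEdges = b := by
  simp [doubleStarPos, card_image_of_injective _ (sym2_mk_comp_injective _ uu_injective)]

theorem card_posEdges_doubleStarPos (a b c : ℕ) :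
    #(doubleStarPos a b c).posEdges = a + c + 1 := by
  have central_disjoint_v : Disjoint {(s(z1, z2) : Sym2 (DSV a b c))}
      (univ.image fun i : Fin a => s(z1, vv i)) := by
    simp [z1, z2, vv]
  have disjoint_w : Disjoint
      ({(s(z1, z2) : Sym2 (DSV a b c))} ∪ univ.image fun i : Fin a => s(z1, vv i))
      (univ.image fun i : Fin c => s(z2, ww i)) := by
    simp [disjoint_left, z1, z2, vv, ww]
  simp only [doubleStarPos, card_union_of_disjoint disjoint_w,
    card_union_of_disjoint central_disjoint_v, card_singleton,
    card_image_of_injective _ (sym2_mk_comp_injective _ vv_injective),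
    card_image_of_injective _ (sym2_mk_comp_injective _ ww_injective), card_univ, Fintype.card_fin]
  omega

theorem image_negLabel_doubleStarPos (f : DSV a b c → ℕ) :
    (doubleStarPos a b c).negEdges.image (negLabel f) = univ.image fun i => f z1 + f (uu i) := by
  simp only [doubleStarPos, image_image, comp_def, negLabel_mk]

theorem image_posLabel_doubleStarPos (f : DSV a b c → ℕ) :
    (doubleStarPos a b c).posEdges.image (posLabel f) =
      {Nat.dist (f z1) (f z2)} ∪ univ.image (fun i => Nat.dist (f z1) (f (vv i))) ∪
        univ.image (fun i => Nat.dist (f z2) (f (ww i))) := by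
  simp only [doubleStarPos, image_union, image_singleton, image_image, comp_def, posLabel_mk]

end Edges

section TwoSided

/-- The labels of the pendant neighbours of a vertex labeled `c`: the `j`-th one is at distance
`1 + j` from `c`, below `c` for the first `l` of them and above `c` for the others. The
subtraction does not truncate as long as `l ≤ c`. -/
def twoSidedLabel (c l j : ℕ) : ℕ :=
  if j < l then c - (1 + j) else c + (1 + j)

variable {c l : ℕ}

theorem dist_twoSidedLabel (h : l ≤ c) (j : ℕ) : Nat.dist c (twoSidedLabel c l j) = 1 + j := by
  unfold twoSidedLabel Nat.dist
  split_ifs <;> omega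

theorem twoSidedLabel_injective (h : l ≤ c) : Injective (twoSidedLabel c l) := by
  intro i j hij
  have hdist := dist_twoSidedLabel h i
  rw [hij, dist_twoSidedLabel h j] at hdist
  omega

end TwoSided

/-- The additively graceful labeling of `doubleStarPos l b (l + b)` for `b ≤ 2`, given on the
vertices in the order `z₁`, `z₂`, `vᵢ`, `uᵢ`, `wⱼ`. -/
def doubleStarLabeling (l b : ℕ) : DSV l b (l + b) → ℕ :=
  Sum.elim (Sum.elim (fun _ => 0) (fun _ => l + b + 1))
    (Sum.elim (fun i => l + b + 2 + i)
      (Sum.elim (fun i => 1 + i) (fun j => twoSidedLabel (l + b + 1) l j)))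

namespace doubleStarLabeling

variable (l b : ℕ)

theorem apply_z1 : doubleStarLabeling l b z1 = 0 := rfl

theorem apply_z2 : doubleStarLabeling l b z2 = l + b + 1 := rfl

theorem apply_vv (i : Fin l) : doubleStarLabeling l b (vv i) = l + b + 2 + i := rfl

theorem apply_uu (i : Fin b) : doubleStarLabeling l b (uu i) = 1 + i := rfl

theorem apply_ww (j : Fin (l + b)) :
    doubleStarLabeling l b (ww j) = twoSidedLabel (l + b + 1) l j := rfl

theorem injective : Injective (doubleStarLabeling l b) := by
  have u_injective : Injective fun i : Fin b => 1 + (i : ℕ) :=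
    (add_right_injective 1).comp Fin.val_injective
  have v_injective : Injective fun i : Fin l => l + b + 2 + (i : ℕ) :=
    (add_right_injective (l + b + 2)).comp Fin.val_injective
  have w_injective : Injective fun j : Fin (l + b) => twoSidedLabel (l + b + 1) l j :=
    (twoSidedLabel_injective (by omega)).comp Fin.val_injective
  refine .sumElim (.sumElim (injective_of_subsingleton _) (injective_of_subsingleton _) ?_)
    (.sumElim v_injective (.sumElim u_injective w_injective ?u_ne_w) ?v_ne) ?center_ne
  · intros
    omega
  case u_ne_w =>
    intro i j
    grind [twoSidedLabel]
  case v_ne =>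
    rintro i (j | j) <;> simp only [Sum.elim_inl, Sum.elim_inr] <;> grind [twoSidedLabel]
  case center_ne =>
    rintro (_ | _) (i | i | i) <;> simp only [Sum.elim_inl, Sum.elim_inr] <;> grind [twoSidedLabel]

theorem apply_le (x : DSV l b (l + b)) : doubleStarLabeling l b x ≤ 2 * l + 2 * b + 1 := by
  rcases x with (_ | _) | (_ | _ | _) <;>
    simp only [doubleStarLabeling, Sum.elim_inl, Sum.elim_inr, twoSidedLabel] <;>
    grind

theorem image_negLabel :
    (doubleStarPos l b (l + b)).negEdges.image (negLabel (doubleStarLabeling l b)) = Icc 1 b := by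
  simp only [image_negLabel_doubleStarPos, apply_z1, apply_uu, zero_add, image_const_add_fin_univ]
  ext x
  simp only [mem_Ico, mem_Icc]
  omega

theorem image_posLabel :
    (doubleStarPos l b (l + b)).posEdges.image (posLabel (doubleStarLabeling l b)) =
      Icc 1 (l + (l + b) + 1) := by
  have w_edge (j : ℕ) : Nat.dist (l + b + 1) (twoSidedLabel (l + b + 1) l j) = 1 + j :=
    dist_twoSidedLabel (by omega) j
  simp only [image_posLabel_doubleStarPos, apply_z1, apply_z2, apply_vv, apply_ww,
    Nat.dist_zero_left, w_edge, image_const_add_fin_univ]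
  ext x
  simp only [mem_union, mem_singleton, mem_Ico, mem_Icc]
  omega

end doubleStarLabeling

theorem doubleStar_twoNeg_addGraceful_of_l_eq_r_sub_two_general (l b r : ℕ) (hb : b ≤ 2)
    (hlr : l + b = r) :
    ∃ f : DSV l b r → ℕ, IsAddGraceful (doubleStarPos l b r) f := by
  subst hlr
  refine ⟨doubleStarLabeling l b, doubleStarLabeling.injective l b, fun x => ?_, ?_, ?_⟩
  · have hx := doubleStarLabeling.apply_le l b x
    rw [card_posEdges_doubleStarPos, card_negEdges_doubleStarPos]
    omega
  · rw [card_posEdges_doubleStarPos, doubleStarLabeling.image_posLabel]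
  · rw [card_negEdges_doubleStarPos, doubleStarLabeling.image_negLabel]

/-- The signed double star with positive central edge `z₁z₂`,
`l` positive and `2` negative pendant edges at `z₁`, and `r` positive pendant
edges at `z₂`, is additively graceful when `l = r - 2` (with `r ≥ 2`). -/
theorem doubleStar_twoNeg_addGraceful_of_l_eq_r_sub_two (l r : ℕ) (hr : 2 ≤ r)
    (hlr : l + 2 = r) :
    ∃ f : DSV l 2 r → ℕ, IsAddGraceful (doubleStarPos l 2 r) f :=
  doubleStar_twoNeg_addGraceful_of_l_eq_r_sub_two_general l 2 r le_rfl hlr
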